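/- arXiv:2207.02029 — 2 statements merged into one kernel-verified Lean document; each statement's English description precedes it below -/
import Mathlib

section
/- Let X be a smooth vector field on an open set U ⊆ ℝ³ satisfying curl X = λX and div X = 0 for a smooth function λ : U → ℝ, and suppose X is not identically zero on connected U. If every zero of X is of finite order, then the zero set {p ∈ U : X(p) = 0} has Hausdorff dimension at most 1. -/
open MeasureTheory

/-!
The zero set is stratified by the order of vanishing. Let `p` be a zero at which all derivatives
of `X` of order at most `n` vanish while some derivative of order `n + 1` does not. All zeros in
the same stratum are zeros of the map `G` collecting the `n`-th derivatives of the three components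
of `X`. Two facts bound the dimension of the stratum near `p` by `1`.

* The kernel of `DG(p)` has dimension at most `1`. For any directions `w₁, …, wₙ`, put
  `A i j = ∂_w ∂_j X_i (p)`. Differentiating the two equations `n` times at `p`, where all
  derivatives of `λ X` of order at most `n` vanish, shows that `A` is symmetric and traceless. The
  kernel of `DG(p)` is contained in the kernel of `A`, and a symmetric traceless `3 × 3` matrix
  with kernel of dimension at least `2` is zero (`matrix_eq_zero`). So a kernel of dimension
  at least `2` would force all derivatives of order `n + 1` to vanish (`finrank_ker_le`).
* If `G` is strictly differentiable at `p`, the orthogonal projection onto the kernel of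
  `DG(p)` is antilipschitz on the zeros of `G` near `p`, so the zero set of `G` has dimension at
  most that of the kernel near `p` (`exists_nhds_dimH_le`).

Countably many strata cover the zero set because every zero has finite order.
-/

open Topology ContDiff

/-! ### Linear algebra -/

/-- A symmetric traceless `3 × 3` matrix of rank at most one is zero. All principal `2 × 2` minors
vanish, since the kernel meets each coordinate plane nontrivially; hence
`0 = (tr A)² = ∑ i j, (A i j)²`. -/
lemma matrix_eq_zero (A : Fin 3 → Fin 3 → ℝ) (hs : ∀ i j, A i j = A j i)
    (ht : ∑ i, A i i = 0) (K : Submodule ℝ (EuclideanSpace ℝ (Fin 3)))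
    (hK : 1 < Module.finrank ℝ K) (hA : ∀ v ∈ K, ∀ i, ∑ j, A i j * v j = 0) :
    ∀ i j, A i j = 0 := by
  have key : ∀ k : Fin 3, ∃ v ∈ K, v ≠ 0 ∧ v k = 0 := by
    intro k
    have h := LinearMap.ker_ne_bot_of_finrank_lt
      (f := (EuclideanSpace.proj k : EuclideanSpace ℝ (Fin 3) →L[ℝ] ℝ).toLinearMap ∘ₗ K.subtype)
      (by simpa using hK)
    obtain ⟨⟨v, hv⟩, hvk, hv0⟩ := (Submodule.ne_bot_iff _).mp h
    exact ⟨v, hv, fun h0 => hv0 (Subtype.ext h0), by simpa using hvk⟩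
  have minor : ∀ a b c d x y : ℝ, a * x + b * y = 0 → c * x + d * y = 0 →
      ¬ (x = 0 ∧ y = 0) → a * d = b * c := by
    intro a b c d x y h1 h2 h3
    by_cases hx : x = 0
    · have hy : y ≠ 0 := fun hy => h3 ⟨hx, hy⟩
      apply mul_right_cancel₀ hy
      linear_combination a * h2 - c * h1
    · apply mul_right_cancel₀ hx
      linear_combination d * h1 - b * h2
  have ext0 : ∀ v : EuclideanSpace ℝ (Fin 3), v 0 = 0 → v 1 = 0 → v 2 = 0 → v = 0 := by
    intro v h0 h1 h2
    ext i
    fin_cases i <;> simpa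
  simp only [Fin.sum_univ_three] at ht hA
  have m01 : A 0 0 * A 1 1 = A 0 1 * A 1 0 := by
    obtain ⟨v, hv, hv0, hk⟩ := key 2
    have h0 := hA v hv 0
    have h1 := hA v hv 1
    rw [hk] at h0 h1
    exact minor _ _ _ _ (v 0) (v 1) (by linarith) (by linarith)
      fun h => hv0 (ext0 v h.1 h.2 hk)
  have m02 : A 0 0 * A 2 2 = A 0 2 * A 2 0 := by
    obtain ⟨v, hv, hv0, hk⟩ := key 1
    have h0 := hA v hv 0
    have h1 := hA v hv 2
    rw [hk] at h0 h1
    exact minor _ _ _ _ (v 0) (v 2) (by linarith) (by linarith)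
      fun h => hv0 (ext0 v h.1 hk h.2)
  have m12 : A 1 1 * A 2 2 = A 1 2 * A 2 1 := by
    obtain ⟨v, hv, hv0, hk⟩ := key 0
    have h0 := hA v hv 1
    have h1 := hA v hv 2
    rw [hk] at h0 h1
    exact minor _ _ _ _ (v 1) (v 2) (by linarith) (by linarith)
      fun h => hv0 (ext0 v hk h.1 h.2)
  rw [hs 1 0] at m01
  rw [hs 2 0] at m02
  rw [hs 2 1] at m12
  have hsq : A 0 0 ^ 2 + A 1 1 ^ 2 + A 2 2 ^ 2 + 2 * A 0 1 ^ 2 + 2 * A 0 2 ^ 2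
      + 2 * A 1 2 ^ 2 = 0 := by
    linear_combination (A 0 0 + A 1 1 + A 2 2) * ht - 2 * m01 - 2 * m02 - 2 * m12
  have hp := fun i j => sq_nonneg (A i j)
  have e00 : A 0 0 = 0 := by
    apply pow_eq_zero_iff two_ne_zero |>.mp
    linarith [hp 0 0, hp 1 1, hp 2 2, hp 0 1, hp 0 2, hp 1 2]
  have e11 : A 1 1 = 0 := by
    apply pow_eq_zero_iff two_ne_zero |>.mp
    linarith [hp 0 0, hp 1 1, hp 2 2, hp 0 1, hp 0 2, hp 1 2]
  have e22 : A 2 2 = 0 := by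
    apply pow_eq_zero_iff two_ne_zero |>.mp
    linarith [hp 0 0, hp 1 1, hp 2 2, hp 0 1, hp 0 2, hp 1 2]
  have e01 : A 0 1 = 0 := by
    apply pow_eq_zero_iff two_ne_zero |>.mp
    linarith [hp 0 0, hp 1 1, hp 2 2, hp 0 1, hp 0 2, hp 1 2]
  have e02 : A 0 2 = 0 := by
    apply pow_eq_zero_iff two_ne_zero |>.mp
    linarith [hp 0 0, hp 1 1, hp 2 2, hp 0 1, hp 0 2, hp 1 2]
  have e12 : A 1 2 = 0 := by
    apply pow_eq_zero_iff two_ne_zero |>.mp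
    linarith [hp 0 0, hp 1 1, hp 2 2, hp 0 1, hp 0 2, hp 1 2]
  have e10 := (hs 1 0).trans e01
  have e20 := (hs 2 0).trans e02
  have e21 := (hs 2 1).trans e12
  intro i j
  fin_cases i <;> fin_cases j <;> assumption

/-! ### Zero sets of strictly differentiable maps -/

/-- Near a point of strict differentiability, the zero set of a map has Hausdorff dimension at most
the dimension of the kernel of the derivative `T`: pairing `T` with the orthogonal projection onto
its kernel gives an injective linear map, so that projection is antilipschitz on nearby zeros. -/
lemma exists_nhds_dimH_le {E F : Type*} [NormedAddCommGroup E] [InnerProductSpace ℝ E]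
    [FiniteDimensional ℝ E] [NormedAddCommGroup F] [NormedSpace ℝ F] {f : E → F}
    {T : E →L[ℝ] F} {p : E} (hf : HasStrictFDerivAt f T p) :
    ∃ V ∈ 𝓝 p, dimH ({x | f x = 0} ∩ V) ≤ Module.finrank ℝ (LinearMap.ker T.toLinearMap) := by
  set K := LinearMap.ker T.toLinearMap with hKdef
  let P : E →L[ℝ] K := K.orthogonalProjectionOnto
  obtain ⟨c, hc0, hc⟩ := LinearMap.exists_antilipschitzWith (T.prod P).toLinearMap (by
    rw [LinearMap.ker_eq_bot']
    intro v hv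
    have h1 : T v = 0 := congrArg Prod.fst hv
    have h2 : P v = 0 := congrArg Prod.snd hv
    have hvK : v ∈ K := h1
    have h3 : P v = ⟨v, hvK⟩ :=
      Submodule.orthogonalProjectionOnto_mem_subspace_eq_self (K := K) ⟨v, hvK⟩
    rw [h2] at h3
    exact (congrArg Subtype.val h3).symm)
  have hc' : (0 : ℝ) < c := hc0
  have hbound : ∀ v : E, ‖v‖ ≤ c * max ‖T v‖ ‖P v‖ := by
    intro v
    have h := hc.le_mul_dist v 0
    rw [map_zero, dist_zero_right, dist_zero_right] at h
    exact h
  have ho := (hasStrictFDerivAt_iff_isLittleO.mp hf).def (c := (2 * c : ℝ)⁻¹) (by positivity)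
  rw [nhds_prod_eq] at ho
  obtain ⟨V, hV, hVV⟩ := (Filter.eventually_prod_self_iff
    (r := fun x y => ‖f x - f y - T (x - y)‖ ≤ (2 * c : ℝ)⁻¹ * ‖x - y‖)).mp ho
  refine ⟨V, hV, ?_⟩
  set S := {x | f x = 0} ∩ V with hS
  have hanti : AntilipschitzWith c (fun x : S => P x) := by
    refine AntilipschitzWith.of_le_mul_dist fun x y => ?_
    have h := hVV x x.2.2 y y.2.2
    have hx : f x = 0 := x.2.1
    have hy : f y = 0 := y.2.1
    rw [hx, hy, sub_zero, zero_sub, norm_neg] at h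
    rw [Subtype.dist_eq, dist_eq_norm, dist_eq_norm, ← map_sub]
    set v : E := (x : E) - y
    by_contra hlt
    rw [not_le] at hlt
    have hv0 : 0 < ‖v‖ := lt_of_le_of_lt (by positivity) hlt
    have hT : c * ‖T v‖ < ‖v‖ := by
      calc c * ‖T v‖ ≤ c * ((2 * (c : ℝ))⁻¹ * ‖v‖) := by gcongr
        _ = ‖v‖ / 2 := by field_simp
        _ < ‖v‖ := by linarith
    rcases max_choice ‖T v‖ ‖P v‖ with hm | hm
    · exact absurd (hbound v) (by rw [hm]; exact not_le.mpr hT)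
    · exact absurd (hbound v) (by rw [hm]; exact not_le.mpr hlt)
  calc dimH S = dimH (Set.univ : Set S) := by
        have h := (isometry_subtype_coe : Isometry (Subtype.val : S → E)).dimH_image Set.univ
        rwa [Set.image_univ, Subtype.range_coe] at h
    _ ≤ dimH ((fun x : S => P x) '' Set.univ) := hanti.le_dimH_image _
    _ ≤ dimH (Set.univ : Set K) := dimH_mono (Set.subset_univ _)
    _ = Module.finrank ℝ K := Real.dimH_univ_eq_finrank K

/-! ### Derivatives of the equations -/

/-- The `n`-th derivative of the directional derivative `∂_v f` equals the derivative in the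
direction `v` of the `n`-th derivative of `f`. -/
lemma iteratedFDeriv_fderiv_apply {E : Type} [NormedAddCommGroup E] [NormedSpace ℝ E] (n : ℕ) :
    ∀ {F : Type} [NormedAddCommGroup F] [NormedSpace ℝ F] {f : E → F} {p : E}
      (_ : ContDiffAt ℝ ∞ f p) (v : E) (w : Fin n → E),
      iteratedFDeriv ℝ n (fun x => fderiv ℝ f x v) p w =
        iteratedFDeriv ℝ (n + 1) f p (Fin.cons v w) := by
  induction n with
  | zero =>
    intro F _ _ f p hf v w
    rw [iteratedFDeriv_succ_apply_left]
    have : iteratedFDeriv ℝ 0 f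
        = (continuousMultilinearCurryFin0 ℝ E F).symm ∘ f := iteratedFDeriv_zero_eq_comp
    rw [this, LinearIsometryEquiv.comp_fderiv]
    simp
  | succ n ih =>
    intro F _ _ f p hf v w
    have hf' : ContDiffAt ℝ ∞ (fderiv ℝ f) p := hf.fderiv_right (by simp)
    rw [iteratedFDeriv_succ_apply_right, iteratedFDeriv_succ_apply_right]
    have hinit : Fin.init (Fin.cons v w : Fin (n + 2) → E)
        = (Fin.cons v (Fin.init w) : Fin (n + 1) → E) := by
      ext i
      refine Fin.cases ?_ (fun j => ?_) i
      · rfl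
      · simp [Fin.init]
    have hlast : (Fin.cons v w : Fin (n + 2) → E) (Fin.last (n + 1)) = w (Fin.last n) := by
      rw [← Fin.succ_last, Fin.cons_succ]
    rw [hinit, hlast, ← ih hf' v (Fin.init w)]
    have hev : (fun y => fderiv ℝ (fun x => fderiv ℝ f x v) y) =ᶠ[𝓝 p]
        fun y => fderiv ℝ (fderiv ℝ f) y v := by
      have h2 : ∀ᶠ y in 𝓝 p, ContDiffAt ℝ 2 f y :=
        (hf.of_le (WithTop.coe_le_coe.mpr (le_top : (2 : ℕ∞) ≤ ⊤))).eventually (by simp)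
      filter_upwards [h2] with y hy
      have hd : DifferentiableAt ℝ (fderiv ℝ f) y :=
        (hy.fderiv_right (m := 1) (by norm_num)).differentiableAt (by norm_num)
      have hsym : IsSymmSndFDerivAt ℝ f y := hy.isSymmSndFDerivAt (by simp)
      ext u
      rw [fderiv_clm_apply hd (differentiableAt_const v)]
      simp [hsym.eq u v]
    rw [(hev.iteratedFDeriv ℝ n).eq_of_nhds]

/-- If all derivatives of `g` of order at most `n` vanish at `p`, then so does the `n`-th derivative
of `f * g`. -/
lemma iteratedFDeriv_mul_eq_zero {E : Type*} [NormedAddCommGroup E] [NormedSpace ℝ E]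
    {f g : E → ℝ} {U : Set E} (hU : IsOpen U) (hf : ContDiffOn ℝ ∞ f U)
    (hg : ContDiffOn ℝ ∞ g U) {p : E} (hp : p ∈ U) {n : ℕ}
    (h0 : ∀ k ≤ n, iteratedFDeriv ℝ k g p = 0) :
    iteratedFDeriv ℝ n (fun x => f x * g x) p = 0 := by
  have h := norm_iteratedFDerivWithin_mul_le hf hg hU.uniqueDiffOn hp (n := n)
    (by exact_mod_cast le_top)
  rw [iteratedFDerivWithin_of_isOpen n hU hp] at h
  rw [← norm_le_zero_iff]
  refine h.trans (le_of_eq (Finset.sum_eq_zero fun i _ => ?_))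
  rw [iteratedFDerivWithin_of_isOpen (n - i) hU hp, h0 _ (Nat.sub_le _ _)]
  simp

/-- The map collecting the `n`-th derivatives of the three components of `X`. -/
noncomputable def derivMap (X : Fin 3 → EuclideanSpace ℝ (Fin 3) → ℝ) (n : ℕ)
    (x : EuclideanSpace ℝ (Fin 3)) :
    Fin 3 → ContinuousMultilinearMap ℝ (fun _ : Fin n => EuclideanSpace ℝ (Fin 3)) ℝ :=
  fun i => iteratedFDeriv ℝ n (X i) x

/-- At a zero of order exactly `n + 1`, the common kernel of the differentials of all the
derivatives of order `n` is at most one-dimensional. -/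
lemma finrank_ker_le (X : Fin 3 → EuclideanSpace ℝ (Fin 3) → ℝ)
    (lam : EuclideanSpace ℝ (Fin 3) → ℝ)
    (U : Set (EuclideanSpace ℝ (Fin 3))) (hU : IsOpen U)
    (hX : ∀ i, ContDiffOn ℝ ∞ (X i) U) (hlam : ContDiffOn ℝ ∞ lam U)
    (hcurl : ∀ x ∈ U, ∀ i j k : Fin 3, (i, j, k) ∈
        ({(0, 1, 2), (1, 2, 0), (2, 0, 1)} : Set (Fin 3 × Fin 3 × Fin 3)) →
      fderiv ℝ (X k) x (EuclideanSpace.single j 1) -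
        fderiv ℝ (X j) x (EuclideanSpace.single k 1) = lam x * X i x)
    (hdiv : ∀ x ∈ U, ∑ i : Fin 3, fderiv ℝ (X i) x (EuclideanSpace.single i 1) = 0)
    (n : ℕ) (p : EuclideanSpace ℝ (Fin 3)) (hp : p ∈ U)
    (h0 : ∀ i, ∀ k ≤ n, iteratedFDeriv ℝ k (X i) p = 0)
    (h1 : ∃ i, iteratedFDeriv ℝ (n + 1) (X i) p ≠ 0)
    (K : Submodule ℝ (EuclideanSpace ℝ (Fin 3)))
    (hK : ∀ v ∈ K, ∀ i, fderiv ℝ (iteratedFDeriv ℝ n (X i)) p v = 0) :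
    Module.finrank ℝ K ≤ 1 := by
  by_contra hlt
  rw [not_le] at hlt
  have hXp : ∀ i, ContDiffAt ℝ ∞ (X i) p := fun i => (hX i).contDiffAt (hU.mem_nhds hp)
  have hdir : ∀ i (v : EuclideanSpace ℝ (Fin 3)),
      ContDiffAt ℝ n (fun x => fderiv ℝ (X i) x v) p := by
    intro i v
    have : ContDiffAt ℝ ∞ (fun x => fderiv ℝ (X i) x v) p :=
      ((hXp i).fderiv_right (m := ∞) (by simp)).clm_apply contDiffAt_const
    exact this.of_le (by exact_mod_cast le_top)
  have hswap : ∀ i (v : EuclideanSpace ℝ (Fin 3)) (w : Fin n → EuclideanSpace ℝ (Fin 3)),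
      iteratedFDeriv ℝ n (fun x => fderiv ℝ (X i) x v) p w
        = fderiv ℝ (iteratedFDeriv ℝ n (X i)) p v w := by
    intro i v w
    rw [iteratedFDeriv_fderiv_apply n (hXp i) v w, iteratedFDeriv_succ_apply_left]
    rfl
  -- The matrix of mixed derivatives `∂_w ∂_j X_i (p)` vanishes for every choice of `w`.
  have hA : ∀ w : Fin n → EuclideanSpace ℝ (Fin 3), ∀ i j,
      fderiv ℝ (iteratedFDeriv ℝ n (X i)) p (EuclideanSpace.single j 1) w = 0 := by
    intro w
    have hc : ∀ i j k : Fin 3, (i, j, k) ∈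
        ({(0, 1, 2), (1, 2, 0), (2, 0, 1)} : Set (Fin 3 × Fin 3 × Fin 3)) →
        fderiv ℝ (iteratedFDeriv ℝ n (X k)) p (EuclideanSpace.single j 1) w
          = fderiv ℝ (iteratedFDeriv ℝ n (X j)) p (EuclideanSpace.single k 1) w := by
      intro i j k hijk
      have hev : (fun x => fderiv ℝ (X k) x (EuclideanSpace.single j 1) -
          fderiv ℝ (X j) x (EuclideanSpace.single k 1)) =ᶠ[𝓝 p] fun x => lam x * X i x := by
        filter_upwards [hU.mem_nhds hp] with x hx using hcurl x hx i j k hijk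
      have h := (hev.iteratedFDeriv ℝ n).eq_of_nhds
      rw [iteratedFDeriv_mul_eq_zero hU hlam (hX i) hp (h0 i),
        fun_iteratedFDeriv_sub_apply (hdir _ _) (hdir _ _)] at h
      rw [← hswap, ← hswap, sub_eq_zero.mp h]
    have hd : ∑ i : Fin 3, fderiv ℝ (iteratedFDeriv ℝ n (X i)) p
        (EuclideanSpace.single i 1) w = 0 := by
      have hev : (fun x => ∑ i : Fin 3, fderiv ℝ (X i) x (EuclideanSpace.single i 1))
          =ᶠ[𝓝 p] fun _ => (0 : ℝ) := by
        filter_upwards [hU.mem_nhds hp] with x hx using hdiv x hx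
      have h := (hev.iteratedFDeriv ℝ n).eq_of_nhds
      rw [iteratedFDeriv_fun_sum_apply (fun i _ => hdir _ _)] at h
      have h' := congrArg (fun M => M w) h
      simp only [← hswap]
      simpa [sum_apply] using h'
    have h21 := hc 0 1 2 (by simp)
    have h02 := hc 1 2 0 (by simp)
    have h10 := hc 2 0 1 (by simp)
    refine matrix_eq_zero (fun i j =>
      fderiv ℝ (iteratedFDeriv ℝ n (X i)) p (EuclideanSpace.single j 1) w) ?_ hd K hlt ?_
    · intro i j
      fin_cases i <;> fin_cases j <;>
        first | rfl | assumption | exact h21.symm | exact h02.symm | exact h10.symm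
    · intro v hv i
      have hsum : v = ∑ j, v j • EuclideanSpace.single j (1 : ℝ) := by
        ext k
        fin_cases k <;> simp [Fin.sum_univ_three]
      have h := congrArg (fun M => M w) (hK v hv i)
      rw [hsum] at h
      simp only [map_sum, map_smul, sum_apply,
        smul_apply, smul_eq_mul,
        zero_apply] at h
      rw [← h]
      exact Finset.sum_congr rfl fun j _ => mul_comm _ _
  obtain ⟨i, hi⟩ := h1
  apply hi
  ext w
  rw [iteratedFDeriv_succ_apply_left]
  have hsum : w 0 = ∑ j, (w 0) j • EuclideanSpace.single j (1 : ℝ) := by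
    ext k
    fin_cases k <;> simp [Fin.sum_univ_three]
  rw [hsum]
  simp only [map_sum, map_smul, sum_apply,
    smul_apply, smul_eq_mul, zero_apply]
  exact Finset.sum_eq_zero fun j _ => by rw [hA, mul_zero]

/-! ### The stratification by order -/

/-- let `X` be a smooth vector field (given by its three component
functions) on a connected open set `U ⊆ ℝ³` with `curl X = λ X` and `div X = 0` for a
smooth function `λ`, and suppose `X` is not identically zero on `U`. If every zero of
`X` in `U` has finite order (some iterated partial derivative of some component is
nonzero there; this is the conclusion of the strong unique continuation property for
Beltrami fields), then the zero set of `X` has Hausdorff dimension at most `1`. -/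
theorem stmt13 (X : Fin 3 → EuclideanSpace ℝ (Fin 3) → ℝ)
    (lam : EuclideanSpace ℝ (Fin 3) → ℝ)
    (U : Set (EuclideanSpace ℝ (Fin 3))) (hU : IsOpen U) (hconn : IsConnected U)
    (hX : ∀ i, ContDiffOn ℝ (⊤ : ℕ∞) (X i) U) (hlam : ContDiffOn ℝ (⊤ : ℕ∞) lam U)
    (hcurl : ∀ x ∈ U, ∀ i j k : Fin 3, (i, j, k) ∈
        ({(0, 1, 2), (1, 2, 0), (2, 0, 1)} : Set (Fin 3 × Fin 3 × Fin 3)) →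
      fderiv ℝ (X k) x (EuclideanSpace.single j 1) -
        fderiv ℝ (X j) x (EuclideanSpace.single k 1) = lam x * X i x)
    (hdiv : ∀ x ∈ U, ∑ i : Fin 3, fderiv ℝ (X i) x (EuclideanSpace.single i 1) = 0)
    (hne : ¬ ∀ x ∈ U, ∀ i, X i x = 0)
    (hfin : ∀ p ∈ U, (∀ i, X i p = 0) →
      ∃ (i : Fin 3) (m : ℕ) (v : Fin m → Fin 3),
        iteratedFDeriv ℝ m (X i) p (fun a => EuclideanSpace.single (v a) (1 : ℝ)) ≠ 0) :
    dimH {p ∈ U | ∀ i, X i p = 0} ≤ 1 := by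
  -- The stratum of zeros of order exactly `n + 1`.
  let Z : ℕ → Set (EuclideanSpace ℝ (Fin 3)) := fun n =>
    {p | p ∈ U ∧ (∀ i, ∀ k ≤ n, iteratedFDeriv ℝ k (X i) p = 0) ∧
      ∃ i, iteratedFDeriv ℝ (n + 1) (X i) p ≠ 0}
  have hcover : {p ∈ U | ∀ i, X i p = 0} ⊆ ⋃ n, Z n := by
    classical
    rintro p ⟨hpU, hp0⟩
    have hex : ∃ m, ∃ i, iteratedFDeriv ℝ m (X i) p ≠ 0 := by
      obtain ⟨i, m, v, h⟩ := hfin p hpU hp0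
      exact ⟨m, i, fun h' => h (by rw [h']; rfl)⟩
    have hmin : ∀ k < Nat.find hex, ∀ i, iteratedFDeriv ℝ k (X i) p = 0 := by
      intro k hk i
      by_contra h
      exact Nat.find_min hex hk ⟨i, h⟩
    have hspec := Nat.find_spec hex
    obtain ⟨n, hn⟩ : ∃ n, Nat.find hex = n + 1 := by
      refine Nat.exists_eq_succ_of_ne_zero fun hz => ?_
      rw [hz] at hspec
      obtain ⟨i, hi⟩ := hspec
      exact hi (by ext w; simp [hp0 i])
    rw [hn] at hspec hmin
    exact Set.mem_iUnion.mpr ⟨n, hpU, fun i k hk => hmin k (by omega) i, hspec⟩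
  have hZ : ∀ n, dimH (Z n) ≤ 1 := by
    intro n
    by_contra hlt
    rw [not_le] at hlt
    obtain ⟨p, ⟨hpU, hp0, hp1⟩, hp⟩ := exists_mem_nhdsWithin_lt_dimH_of_lt_dimH hlt
    have hstrict : HasStrictFDerivAt (derivMap X n)
        (ContinuousLinearMap.pi fun i => fderiv ℝ (iteratedFDeriv ℝ n (X i)) p) p := by
      refine hasStrictFDerivAt_pi.mpr fun i => ?_
      have hXp : ContDiffAt ℝ ∞ (X i) p := (hX i).contDiffAt (hU.mem_nhds hpU)
      have : ContDiffAt ℝ 1 (iteratedFDeriv ℝ n (X i)) p :=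
        hXp.iteratedFDeriv_right (by exact_mod_cast le_top)
      exact this.hasStrictFDerivAt one_ne_zero
    obtain ⟨V, hV, hdim⟩ := exists_nhds_dimH_le hstrict
    have hker := finrank_ker_le X lam U hU hX hlam hcurl hdiv n p hpU hp0 hp1
      (LinearMap.ker (ContinuousLinearMap.pi fun i =>
        fderiv ℝ (iteratedFDeriv ℝ n (X i)) p).toLinearMap)
      (fun v hv i => congrFun hv i)
    refine absurd (hp (Z n ∩ V) (Filter.inter_mem self_mem_nhdsWithin
      (mem_nhdsWithin_of_mem_nhds hV))) (not_lt.mpr ?_)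
    calc dimH (Z n ∩ V) ≤ dimH ({x | derivMap X n x = 0} ∩ V) :=
          dimH_mono (Set.inter_subset_inter_left _ fun x hx => funext fun i => hx.2.1 i n le_rfl)
      _ ≤ _ := hdim
      _ ≤ 1 := by exact_mod_cast hker
  calc dimH {p ∈ U | ∀ i, X i p = 0} ≤ dimH (⋃ n, Z n) := dimH_mono hcover
    _ = ⨆ n, dimH (Z n) := dimH_iUnion _
    _ ≤ 1 := iSup_le hZ
end

section
/- Let g be a C^{1,1} Riemannian metric on a C^{2,1} manifold with boundary M̄, and p ∈ ∂M̄. Then there exists a C^{1,1} boundary chart μ : U → ℍⁿ around p such that μ(p) = 0, g_{ij}(p) = δ_{ij} for all i,j, and g_{jn}(q) = δ_{jn} for all j and all q ∈ ∂M̄ ∩ U. -/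
/-!
The metric condition `G_{jn} = δ_{jn}` is only required on the boundary, so only the first-order
behaviour of the chart across the boundary matters, and geodesics may be replaced by straight
segments. With `N` the inward `g`-unit normal field along `{xₙ = 0}` and `P` a matrix whose first
`n` columns are a `g(p)`-orthonormal basis of the boundary hyperplane and whose last column is
zero, the inverse chart is

  `ν y = p + P y + yₙ • N (p + P y)`.

Since `p + P y` always lies on the boundary, `ν` is defined on the whole space. The field `N` is a
smooth function of the coefficients of `g` (`unitNormal`, written with Cramer's rule), and these,
restricted to the boundary, are `C^{1,1}`; hence so is `ν`. The last coordinate of `ν y` is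
`yₙ Nₙ` with `Nₙ > 0`, so `ν` preserves the half space, its complement and its boundary. At
`yₙ = 0` the Jacobian is `J = P + N eₙᵀ`, and `Jᵀ g J` has last column `eₙ` (`gram_last`) and equals
`1` at `y = 0` (`gram_eq_one`). In particular `J` is invertible at `0`; the inverse function theorem
gives `μ`, whose derivative `(Dν)⁻¹ ∘ μ` is again locally Lipschitz (`C11At.symm`).
-/


open Matrix

/-- The Jacobian matrix (within a set `S`) of a map `ν : ℝⁿ → ℝⁿ` at `y`. -/
noncomputable def jacobianWithin (n : ℕ) (S : Set (Fin n → ℝ))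
    (ν : (Fin n → ℝ) → (Fin n → ℝ)) (y : Fin n → ℝ) : Matrix (Fin n) (Fin n) ℝ :=
  Matrix.of fun i j => fderivWithin ℝ ν S y (Pi.single j 1) i

/-- The pullback of the metric `g` under the map `ν` (coordinate change), i.e.
`(Dν)ᵀ · g(ν y) · (Dν)`. -/
noncomputable def pullbackMetric (n : ℕ) (S : Set (Fin n → ℝ))
    (ν : (Fin n → ℝ) → (Fin n → ℝ))
    (g : (Fin n → ℝ) → Matrix (Fin n) (Fin n) ℝ) (y : Fin n → ℝ) :
    Matrix (Fin n) (Fin n) ℝ :=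
  (jacobianWithin n S ν y)ᵀ * g (ν y) * jacobianWithin n S ν y

open Filter Topology

/-! ### Maps of class `C^{1,1}` near a point -/

section C11
variable {E F G : Type*} [NormedAddCommGroup E] [NormedSpace ℝ E]
  [NormedAddCommGroup F] [NormedSpace ℝ F] [NormedAddCommGroup G] [NormedSpace ℝ G]

/-- `f` is Lipschitz on some neighbourhood of `x`. -/
def LipAt {X Y : Type*} [PseudoEMetricSpace X] [PseudoEMetricSpace Y] (f : X → Y) (x : X) : Prop :=
  ∃ K : NNReal, ∃ s ∈ 𝓝 x, LipschitzOnWith K f s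

lemma LipAt.continuousAt {X Y : Type*} [PseudoEMetricSpace X] [PseudoEMetricSpace Y]
    {f : X → Y} {x : X} (h : LipAt f x) : ContinuousAt f x := by
  obtain ⟨K, s, hs, h⟩ := h
  exact h.continuousOn.continuousAt hs

lemma LipAt.comp {X Y Z : Type*} [PseudoEMetricSpace X] [PseudoEMetricSpace Y]
    [PseudoEMetricSpace Z] {g : Y → Z} {f : X → Y} {x : X} (hg : LipAt g (f x))
    (hf : LipAt f x) : LipAt (fun y => g (f y)) x := by
  have hc := hf.continuousAt
  obtain ⟨K, s, hs, h⟩ := hf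
  obtain ⟨K', t, ht, h'⟩ := hg
  refine ⟨K' * K, s ∩ f ⁻¹' t, inter_mem hs (hc ht), ?_⟩
  exact h'.comp (h.mono Set.inter_subset_left) (fun y hy => hy.2)

lemma LipAt.prodMk {X Y Z : Type*} [PseudoEMetricSpace X] [PseudoEMetricSpace Y]
    [PseudoEMetricSpace Z] {f : X → Y} {g : X → Z} {x : X} (hf : LipAt f x)
    (hg : LipAt g x) : LipAt (fun y => (f y, g y)) x := by
  obtain ⟨K, s, hs, h⟩ := hf
  obtain ⟨K', t, ht, h'⟩ := hg
  exact ⟨max K K', s ∩ t, inter_mem hs ht,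
    (h.mono Set.inter_subset_left).prodMk (h'.mono Set.inter_subset_right)⟩

lemma ContDiffAt.lipAt {f : E → F} {x : E} (h : ContDiffAt ℝ 1 f x) : LipAt f x :=
  h.exists_lipschitzOnWith

/-- `f` is of class `C^{1,1}` near `x`: it is differentiable near `x` with a derivative that is
Lipschitz on some neighbourhood of `x`. -/
def C11At (f : E → F) (x : E) : Prop :=
  ∃ f' : E → E →L[ℝ] F, (∀ᶠ y in 𝓝 x, HasFDerivAt f (f' y) y) ∧ LipAt f' x

lemma C11At.contDiffAt {f : E → F} {x : E} (h : C11At f x) : ContDiffAt ℝ 1 f x := by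
  obtain ⟨f', h, K, s, hs, hL⟩ := h
  exact contDiffAt_one_iff.2 ⟨f', _, inter_mem hs h, hL.continuousOn.mono Set.inter_subset_left,
    fun y hy => hy.2⟩

lemma C11At.lipAt_fderiv {f : E → F} {x : E} (h : C11At f x) : LipAt (fderiv ℝ f) x := by
  obtain ⟨f', h, K, s, hs, hL⟩ := h
  refine ⟨K, _, inter_mem hs h, fun y hy z hz => ?_⟩
  rw [hy.2.fderiv, hz.2.fderiv]
  exact hL hy.1 hz.1

lemma C11At.eventually {f : E → F} {x : E} (h : C11At f x) :
    ∀ᶠ y in 𝓝 x, HasFDerivAt f (fderiv ℝ f y) y := by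
  obtain ⟨f', h, -⟩ := h
  exact h.mono fun y hy => hy.differentiableAt.hasFDerivAt

lemma ContDiffAt.c11At {f : E → F} {x : E} (h : ContDiffAt ℝ 2 f x) : C11At f x :=
  ⟨fderiv ℝ f, ((h.eventually (by simp)).mono fun y hy =>
      (hy.differentiableAt (by simp)).hasFDerivAt),
    (h.fderiv_right (m := 1) (by norm_num)).lipAt⟩

lemma lipAt_clm_comp {X : Type*} [PseudoEMetricSpace X] {a : X → F →L[ℝ] G} {b : X → E →L[ℝ] F}
    {x : X} (ha : LipAt a x) (hb : LipAt b x) : LipAt (fun y => (a y).comp (b y)) x := by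
  have h : ContDiff ℝ 1 fun p : (F →L[ℝ] G) × (E →L[ℝ] F) => p.1.comp p.2 :=
    contDiff_fst.clm_comp contDiff_snd
  have h2 : LipAt (fun p : (F →L[ℝ] G) × (E →L[ℝ] F) => p.1.comp p.2) (a x, b x) :=
    h.contDiffAt.lipAt
  have h3 : LipAt (fun y => (a y, b y)) x := ha.prodMk hb
  exact LipAt.comp (f := fun y => (a y, b y)) h2 h3

lemma ContDiffAt.comp_c11At {g : F → G} {f : E → F} {x : E} (hg : ContDiffAt ℝ 2 g (f x))
    (hf : C11At f x) : C11At (fun y => g (f y)) x := by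
  have hc := hf.contDiffAt
  refine ⟨fun y => (fderiv ℝ g (f y)).comp (fderiv ℝ f y), ?_, ?_⟩
  · filter_upwards [hf.eventually, hc.continuousAt.eventually hg.c11At.eventually] with y h1 h2
    exact h2.comp y h1
  · exact lipAt_clm_comp (hg.c11At.lipAt_fderiv.comp hc.lipAt) hf.lipAt_fderiv

lemma C11At.prodMk {f : E → F} {g : E → G} {x : E} (hf : C11At f x) (hg : C11At g x) :
    C11At (fun y => (f y, g y)) x := by
  refine ⟨fun y => (fderiv ℝ f y).prod (fderiv ℝ g y), ?_, ?_⟩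
  · filter_upwards [hf.eventually, hg.eventually] with y h1 h2
    exact h1.prodMk h2
  · have h2 : LipAt (fun p : (E →L[ℝ] F) × (E →L[ℝ] G) => p.1.prod p.2)
        (fderiv ℝ f x, fderiv ℝ g x) :=
      ⟨1, Set.univ, univ_mem,
        (ContinuousLinearMap.prodₗᵢ (𝕜 := ℝ) (E := E) (F := F) (G := G) ℝ).lipschitz.lipschitzOnWith⟩
    exact LipAt.comp (f := fun y => (fderiv ℝ f y, fderiv ℝ g y)) h2
      (hf.lipAt_fderiv.prodMk hg.lipAt_fderiv)

lemma c11At_pi {ι : Type*} [Fintype ι] {f : E → ι → F} {x : E}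
    (h : ∀ i, C11At (fun y => f y i) x) : C11At f x := by
  choose f' h1 K s hs hL using h
  refine ⟨fun y => ContinuousLinearMap.pi fun i => f' i y, ?_, Finset.univ.sup K, ⋂ i, s i,
    iInter_mem.2 hs, ?_⟩
  · filter_upwards [eventually_all.2 h1] with y hy
    exact hasFDerivAt_pi.2 hy
  · refine LipschitzOnWith.of_dist_le_mul fun y hy z hz => ?_
    rw [dist_eq_norm]
    refine ContinuousLinearMap.norm_pi_le_of_le
      (L := fun i => f' i y - f' i z) (fun i => ?_) (by positivity)
    rw [← dist_eq_norm]
    refine ((hL i).dist_le_mul _ (Set.mem_iInter.1 hy i) _ (Set.mem_iInter.1 hz i)).trans ?_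
    gcongr
    exact_mod_cast Finset.le_sup (f := K) (Finset.mem_univ i)

/-- A local inverse of a `C^{1,1}` map with invertible derivative is `C^{1,1}`: its derivative is
the pointwise inverse of a Lipschitz field of invertible operators. -/
lemma C11At.symm [CompleteSpace E] (φ : OpenPartialHomeomorph E F) {D : E ≃L[ℝ] F} {a : E}
    (ha : a ∈ φ.source) (hf : C11At φ a) (hD : HasFDerivAt φ (D : E →L[ℝ] F) a) :
    C11At φ.symm (φ a) := by
  have hta : φ a ∈ φ.target := φ.map_source ha
  have hs : φ.symm (φ a) = a := φ.left_inv ha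
  have hμ : ContDiffAt ℝ 1 φ.symm (φ a) :=
    φ.contDiffAt_symm hta (f₀' := D) (by rwa [hs]) (by rw [hs]; exact hf.contDiffAt)
  have hL : LipAt (fun x => fderiv ℝ φ (φ.symm x)) (φ a) :=
    LipAt.comp (by rw [hs]; exact hf.lipAt_fderiv) hμ.lipAt
  refine ⟨fun x => (fderiv ℝ φ (φ.symm x)).inverse, ?_, ?_⟩
  · have h0 : (fderiv ℝ φ (φ.symm (φ a))) = (D : E →L[ℝ] F) := by rw [hs, hD.fderiv]
    have h1 : ∀ᶠ x in 𝓝 (φ a), fderiv ℝ φ (φ.symm x) ∈ Set.range ((↑) : (E ≃L[ℝ] F) → E →L[ℝ] F) :=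
      hL.continuousAt.eventually (by
        change _ ∈ 𝓝 (fderiv ℝ φ (φ.symm (φ a)))
        rw [h0]; exact D.nhds)
    have h2 : ∀ᶠ x in 𝓝 (φ a), HasFDerivAt φ (fderiv ℝ φ (φ.symm x)) (φ.symm x) :=
      hμ.continuousAt.eventually (by rw [hs]; exact hf.eventually)
    filter_upwards [h1, h2, φ.open_target.mem_nhds hta] with x ⟨e, he⟩ h2 h3
    rw [← he] at h2 ⊢
    rw [ContinuousLinearMap.inverse_equiv]
    exact φ.hasFDerivAt_symm h3 h2
  · refine LipAt.comp (g := ContinuousLinearMap.inverse) ?_ hL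
    rw [hs, hD.fderiv]
    exact (contDiffAt_map_inverse D).lipAt
end C11

lemma C11At.exists_open {E F : Type*} [NormedAddCommGroup E] [NormedSpace ℝ E]
    [NormedAddCommGroup F] [NormedSpace ℝ F] {f : E → F} {x : E} (h : C11At f x) :
    ∃ V : Set E, IsOpen V ∧ x ∈ V ∧ (∀ y ∈ V, HasFDerivAt f (fderiv ℝ f y) y) ∧
      ∃ K, LipschitzOnWith K (fderiv ℝ f) V := by
  obtain ⟨K, s, hs, hL⟩ := h.lipAt_fderiv
  obtain ⟨V, hV, hVo, hx⟩ := mem_nhds_iff.1 (inter_mem hs h.eventually)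
  exact ⟨V, hVo, hx, fun y hy => (hV hy).2, K, hL.mono fun y hy => (hV hy).1⟩

lemma uniqueDiffOn_halfSpace (n : ℕ) :
    UniqueDiffOn ℝ {x : Fin (n + 1) → ℝ | 0 ≤ x (Fin.last n)} := by
  refine uniqueDiffOn_convex ?_ ⟨fun _ => 1, ?_⟩
  · intro x hx y hy a b ha hb _
    simp only [Set.mem_ofPred_eq] at hx hy
    simp only [Set.mem_ofPred_eq, Pi.add_apply, Pi.smul_apply, smul_eq_mul]
    positivity
  · refine mem_interior.2 ⟨{x | 0 < x (Fin.last n)}, fun x (hx : 0 < x (Fin.last n)) =>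
      (le_of_lt hx : 0 ≤ x (Fin.last n)), ?_, by simp⟩
    exact isOpen_lt continuous_const (continuous_apply _)

lemma contDiffOn_lipschitz_within {E F : Type*} [NormedAddCommGroup E] [NormedSpace ℝ E]
    [NormedAddCommGroup F] [NormedSpace ℝ F] {f : E → F} {V T : Set E} {K : NNReal}
    (hT : UniqueDiffOn ℝ T) (hV : IsOpen V) (h : ∀ y ∈ V, HasFDerivAt f (fderiv ℝ f y) y)
    (hL : LipschitzOnWith K (fderiv ℝ f) V) (hTV : T ⊆ V) :
    ContDiffOn ℝ 1 f T ∧ LipschitzOnWith K (fderivWithin ℝ f T) T := by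
  have he : ∀ y ∈ T, fderivWithin ℝ f T y = fderiv ℝ f y := fun y hy =>
    (h y (hTV hy)).hasFDerivWithinAt.fderivWithin (hT y hy)
  have hl : LipschitzOnWith K (fderivWithin ℝ f T) T := by
    intro y hy z hz
    rw [he y hy, he z hz]
    exact hL (hTV hy) (hTV hz)
  refine ⟨fun y hy => ContDiffAt.contDiffWithinAt (contDiffAt_one_iff.2 ?_), hl⟩
  exact ⟨fderiv ℝ f, V, hV.mem_nhds (hTV hy), hL.continuousOn, h⟩

/-! ### Linear algebra and smoothness of the unit normal -/

lemma exists_orthonormalizing {ι : Type*} [Fintype ι] [DecidableEq ι] {S : Matrix ι ι ℝ}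
    (hS : S.PosDef) : ∃ B : Matrix ι ι ℝ, Bᵀ * S * B = 1 := by
  have h := hS.1.conjStarAlgAut_star_eigenvectorUnitary
  set U : Matrix ι ι ℝ := hS.1.eigenvectorUnitary.1
  have h' : Uᵀ * S * U = diagonal hS.1.eigenvalues := by
    simpa [Unitary.conjStarAlgAut_apply, star_eq_conjTranspose] using h
  refine ⟨U * diagonal fun i => (√(hS.1.eigenvalues i))⁻¹, ?_⟩
  have : (U * diagonal fun i => (√(hS.1.eigenvalues i))⁻¹)ᵀ * S *
      (U * diagonal fun i => (√(hS.1.eigenvalues i))⁻¹) =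
      (diagonal fun i => (√(hS.1.eigenvalues i))⁻¹) * (Uᵀ * S * U) *
        (diagonal fun i => (√(hS.1.eigenvalues i))⁻¹) := by
    simp [transpose_mul, Matrix.mul_assoc]
  rw [this, h', diagonal_mul_diagonal, diagonal_mul_diagonal, ← diagonal_one]
  congr 1
  ext i
  have hp := hS.eigenvalues_pos i
  have := Real.mul_self_sqrt hp.le
  have h2 : √(hS.1.eigenvalues i) ≠ 0 := (Real.sqrt_pos.2 hp).ne'
  field_simp
  nlinarith

/-- The inward unit normal to the boundary `{xₙ = 0}` for a metric with matrix `m`. The adjugate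
column `cramer m eₙ = det m • m⁻¹ eₙ` replaces the inverse matrix, so that smoothness in `m` is
visible. -/
noncomputable def unitNormal {n : ℕ} (m : Matrix (Fin (n + 1)) (Fin (n + 1)) ℝ) :
    Fin (n + 1) → ℝ :=
  (√(m.det * cramer m (Pi.single (Fin.last n) 1) (Fin.last n)))⁻¹ •
    cramer m (Pi.single (Fin.last n) 1)

lemma cramer_last_pos {n : ℕ} {m : Matrix (Fin (n + 1)) (Fin (n + 1)) ℝ} (hm : m.PosDef) :
    0 < cramer m (Pi.single (Fin.last n) 1) (Fin.last n) := by
  have hd := hm.det_pos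
  set w := cramer m (Pi.single (Fin.last n) 1) with hw
  have h1 : m *ᵥ w = m.det • Pi.single (Fin.last n) 1 := mulVec_cramer _ _
  have hw0 : w ≠ 0 := by
    intro h0
    rw [h0, mulVec_zero] at h1
    have := congrFun h1 (Fin.last n)
    simp at this
    exact hd.ne' this.symm
  have := hm.dotProduct_mulVec_pos hw0
  rw [h1] at this
  simp at this
  exact pos_of_mul_pos_right this hd.le

/-- The unit normal is positively inward, metrically orthogonal to the boundary (its image under
`m` is a multiple of the last covector), and of unit length. -/
lemma unitNormal_spec {n : ℕ} {m : Matrix (Fin (n + 1)) (Fin (n + 1)) ℝ} (hm : m.PosDef) :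
    0 < unitNormal m (Fin.last n) ∧ ∃ c : ℝ,
      m *ᵥ unitNormal m = c • Pi.single (Fin.last n) 1 ∧ c * unitNormal m (Fin.last n) = 1 := by
  have hd := hm.det_pos
  have hw := cramer_last_pos hm
  unfold unitNormal
  set w := cramer m (Pi.single (Fin.last n) 1) with hw'
  have h1 : m *ᵥ w = m.det • Pi.single (Fin.last n) 1 := mulVec_cramer _ _
  have hs : 0 < √(m.det * w (Fin.last n)) := Real.sqrt_pos.2 (mul_pos hd hw)
  refine ⟨by simp only [Pi.smul_apply, smul_eq_mul]; positivity,
    (√(m.det * w (Fin.last n)))⁻¹ * m.det, ?_, ?_⟩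
  · rw [mulVec_smul, h1, smul_smul]
  · have := Real.mul_self_sqrt (mul_pos hd hw).le
    simp only [Pi.smul_apply, smul_eq_mul]
    field_simp
    nlinarith

lemma contDiff_det {ι X : Type*} [Fintype ι] [DecidableEq ι] [NormedAddCommGroup X]
    [NormedSpace ℝ X] {k : WithTop ℕ∞} {M : X → Matrix ι ι ℝ}
    (h : ∀ i j, ContDiff ℝ k fun x => M x i j) : ContDiff ℝ k fun x => (M x).det := by
  simp only [det_apply, Units.smul_def, zsmul_eq_mul]
  exact ContDiff.sum fun σ _ => contDiff_const.mul (contDiff_prod fun i _ => h _ _)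

lemma contDiffAt_unitNormal {n : ℕ} {m : Fin (n + 1) → Fin (n + 1) → ℝ}
    (hm : (Matrix.of m).PosDef) :
    ContDiffAt ℝ 2 (fun m : Fin (n + 1) → Fin (n + 1) → ℝ => unitNormal (Matrix.of m)) m := by
  have h0 : ∀ i j, ContDiff ℝ 2 fun m : Fin (n + 1) → Fin (n + 1) → ℝ => m i j :=
    fun i j => by fun_prop
  have hd : ContDiff ℝ 2 fun m : Fin (n + 1) → Fin (n + 1) → ℝ => (Matrix.of m).det :=
    contDiff_det h0
  have hc : ContDiff ℝ 2 fun m : Fin (n + 1) → Fin (n + 1) → ℝ =>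
      cramer (Matrix.of m) (Pi.single (Fin.last n) 1) := by
    refine contDiff_pi.2 fun i => ?_
    simp only [cramer_apply]
    refine contDiff_det fun a b => ?_
    simp only [updateCol_apply]
    split_ifs
    · exact contDiff_const
    · exact h0 _ _
  have hp := mul_pos hm.det_pos (cramer_last_pos hm)
  exact (((hd.mul (contDiff_pi.1 hc _)).contDiffAt.sqrt hp.ne').inv
    (Real.sqrt_pos.2 hp).ne').smul hc.contDiffAt

/-- Existence of a matrix whose first `n` columns are an `S`-orthonormal basis of the boundary
hyperplane, and whose last column vanishes. -/
lemma exists_boundaryFrame {n : ℕ} {S : Matrix (Fin (n + 1)) (Fin (n + 1)) ℝ} (hS : S.PosDef) :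
    ∃ P : Matrix (Fin (n + 1)) (Fin (n + 1)) ℝ, (∀ j, P (Fin.last n) j = 0) ∧
      (∀ i, P i (Fin.last n) = 0) ∧
      ∀ i j : Fin n, (Pᵀ * S * P) i.castSucc j.castSucc = if i = j then 1 else 0 := by
  obtain ⟨B, hB⟩ := exists_orthonormalizing (hS.submatrix (Fin.castSucc_injective n))
  refine ⟨Matrix.of fun a b => Fin.lastCases (motive := fun _ => ℝ) 0
    (fun i => Fin.lastCases (motive := fun _ => ℝ) 0 (fun j => B i j) b) a, ?_, ?_, ?_⟩
  · intro j; simp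
  · intro i; refine Fin.lastCases ?_ (fun i => ?_) i <;> simp
  · intro i j
    have := congrFun (congrFun hB i) j
    rw [Matrix.one_apply] at this
    rw [← this]
    simp [Matrix.mul_apply, Fin.sum_univ_castSucc]

/-- With last column the unit normal and other columns tangent to the boundary, the last column
of the Gram matrix is that of the identity. -/
lemma gram_last {n : ℕ} {S P : Matrix (Fin (n + 1)) (Fin (n + 1)) ℝ} (hS : S.PosDef)
    (hr : ∀ j, P (Fin.last n) j = 0) (hc : ∀ i, P i (Fin.last n) = 0) (j : Fin (n + 1)) :
    ((P + vecMulVec (unitNormal S) (Pi.single (Fin.last n) 1))ᵀ * S *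
      (P + vecMulVec (unitNormal S) (Pi.single (Fin.last n) 1))) j (Fin.last n) =
      if j = Fin.last n then 1 else 0 := by
  obtain ⟨-, c, h1, h2⟩ := unitNormal_spec hS
  set N := unitNormal S
  set J := P + vecMulVec N (Pi.single (Fin.last n) 1) with hJ
  have hN : J *ᵥ Pi.single (Fin.last n) 1 = N := by
    ext i
    simp [hJ, hc, vecMulVec_apply]
  have : (Jᵀ * S * J) j (Fin.last n) = ((Jᵀ * S * J) *ᵥ Pi.single (Fin.last n) 1) j := by simp
  rw [this, ← mulVec_mulVec, ← mulVec_mulVec, hN, h1, mulVec_smul]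
  simp only [Pi.smul_apply, mulVec_single_one, col_apply, transpose_apply, hJ, Matrix.add_apply, hr,
    vecMulVec_apply, smul_eq_mul, zero_add]
  split_ifs with h
  · subst h; simpa using h2
  · simp [h]

lemma gram_eq_one {n : ℕ} {S P : Matrix (Fin (n + 1)) (Fin (n + 1)) ℝ} (hS : S.PosDef)
    (hr : ∀ j, P (Fin.last n) j = 0) (hc : ∀ i, P i (Fin.last n) = 0)
    (hP : ∀ i j : Fin n, (Pᵀ * S * P) i.castSucc j.castSucc = if i = j then 1 else 0) :
    (P + vecMulVec (unitNormal S) (Pi.single (Fin.last n) 1))ᵀ * S *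
      (P + vecMulVec (unitNormal S) (Pi.single (Fin.last n) 1)) = 1 := by
  have hl := gram_last hS hr hc
  set N := unitNormal S
  set J := P + vecMulVec N (Pi.single (Fin.last n) 1) with hJ
  have hSs : Sᵀ = S := by simpa [Matrix.IsSymm] using hS.1
  have hsym : (Jᵀ * S * J)ᵀ = Jᵀ * S * J := by simp [transpose_mul, hSs, Matrix.mul_assoc]
  have hJP : ∀ a (i : Fin n), J a i.castSucc = P a i.castSucc := fun a i => by
    simp [hJ, vecMulVec_apply, (Fin.castSucc_lt_last i).ne]
  ext i j
  rw [one_apply]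
  refine Fin.lastCases ?_ (fun j => ?_) j
  · exact hl i
  · refine Fin.lastCases ?_ (fun i => ?_) i
    · rw [← hsym, transpose_apply, hl]
      simp only [eq_comm]
    · have : (Jᵀ * S * J) i.castSucc j.castSucc = (Pᵀ * S * P) i.castSucc j.castSucc := by
        simp only [mul_apply, transpose_apply, hJP]
      rw [this, hP]
      simp

/-! ### The chart -/

/-- Restricted to the boundary and pulled back to all of `ℝⁿ` by an affine map into the boundary,
the metric coefficients become `C^{1,1}` in the ordinary, two-sided sense. -/
lemma c11At_comp_affine {E : Type*} [NormedAddCommGroup E] [NormedSpace ℝ E] {f : E → ℝ}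
    {H : Set E} (hf : ContDiffOn ℝ 1 f H) {K : NNReal}
    (hK : LipschitzOnWith K (fun x => fderivWithin ℝ f H x) H) (p : E) (L : E →L[ℝ] E)
    (hH : ∀ y, p + L y ∈ H) (y : E) : C11At (fun y => f (p + L y)) y := by
  have hb : ∀ z, HasFDerivAt (fun y => p + L y) L z := fun z => L.hasFDerivAt.const_add p
  have hbc : ContDiffAt ℝ 1 (fun y => p + L y) y := (contDiff_const.add L.contDiff).contDiffAt
  refine ⟨fun z => (fderivWithin ℝ f H (p + L z)).comp L, .of_forall fun z => ?_, ?_⟩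
  · have := HasFDerivWithinAt.comp (g := f) (t := H) (s := Set.univ) z
      ((hf.differentiableOn one_ne_zero) _ (hH z)).hasFDerivWithinAt
      (hb z).hasFDerivWithinAt (fun z _ => hH z)
    exact this.hasFDerivAt univ_mem
  · refine lipAt_clm_comp ?_ (contDiffAt_const.lipAt)
    obtain ⟨K', s, hs, hs'⟩ := hbc.lipAt
    exact ⟨K * K', s, hs, hK.comp hs' fun z _ => hH z⟩

/-- The chart `ν y = p + P y + yₙ N(p + P y)`: straight segments along the inward unit normal field
`N` of the boundary, with `P` a boundary frame at `p`. Here `J y` is the Jacobian matrix of `ν` at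
boundary points `y`. -/
lemma exists_normalMap (n : ℕ)
    (g : (Fin (n + 1) → ℝ) → Matrix (Fin (n + 1)) (Fin (n + 1)) ℝ)
    (hgpos : ∀ x : Fin (n + 1) → ℝ, 0 ≤ x (Fin.last n) → (g x).PosDef)
    (hgC1 : ∀ i j, ContDiffOn ℝ 1 (fun x => g x i j)
      {x : Fin (n + 1) → ℝ | 0 ≤ x (Fin.last n)})
    (hgLip : ∃ K : NNReal, ∀ i j, LipschitzOnWith K
      (fun x => fderivWithin ℝ (fun y => g y i j)
        {x : Fin (n + 1) → ℝ | 0 ≤ x (Fin.last n)} x)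
      {x : Fin (n + 1) → ℝ | 0 ≤ x (Fin.last n)})
    (p : Fin (n + 1) → ℝ) (hp : p (Fin.last n) = 0) :
    ∃ (ν : (Fin (n + 1) → ℝ) → (Fin (n + 1) → ℝ))
      (J : (Fin (n + 1) → ℝ) → Matrix (Fin (n + 1)) (Fin (n + 1)) ℝ),
      ν 0 = p ∧ (∀ y, C11At ν y) ∧
      (∀ y, ∃ a : ℝ, 0 < a ∧ ν y (Fin.last n) = a * y (Fin.last n)) ∧
      (∀ y, y (Fin.last n) = 0 → HasFDerivAt ν (LinearMap.toContinuousLinearMap (toLin' (J y))) y) ∧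
      (J 0)ᵀ * g p * J 0 = 1 ∧
      (∀ y, y (Fin.last n) = 0 → ∀ j, ((J y)ᵀ * g (ν y) * J y) j (Fin.last n) =
          if j = Fin.last n then 1 else 0) := by
  obtain ⟨K, hK⟩ := hgLip
  obtain ⟨P, hr, hc, hP⟩ := exists_boundaryFrame (hgpos p hp.ge)
  set L : (Fin (n + 1) → ℝ) →L[ℝ] (Fin (n + 1) → ℝ) :=
    LinearMap.toContinuousLinearMap (toLin' P) with hL
  have hLa : ∀ y, L y = P *ᵥ y := fun y => by simp [hL]
  have hLn : ∀ y, L y (Fin.last n) = 0 := fun y => by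
    rw [hLa]; simp [mulVec, dotProduct, hr]
  have hbn : ∀ y, (p + L y) (Fin.last n) = 0 := fun y => by simp [hLn, hp]
  have hpos : ∀ y, (g (p + L y)).PosDef := fun y => hgpos _ (hbn y).ge
  set N : (Fin (n + 1) → ℝ) → (Fin (n + 1) → ℝ) := fun y => unitNormal (g (p + L y)) with hN
  have hent : ∀ y, C11At (fun y => (fun i j => g (p + L y) i j : Fin (n + 1) → Fin (n + 1) → ℝ)) y :=
    fun y => c11At_pi fun i => c11At_pi fun j =>
      c11At_comp_affine (hgC1 i j) (hK i j) p L (fun z => (hbn z).ge) y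
  have hNC : ∀ y, C11At N y := fun y =>
    ContDiffAt.comp_c11At (f := fun y i j => g (p + L y) i j)
      (g := fun m : Fin (n + 1) → Fin (n + 1) → ℝ => unitNormal (Matrix.of m))
      (contDiffAt_unitNormal (hpos y)) (hent y)
  refine ⟨fun y => p + L y + y (Fin.last n) • N y,
    fun y => P + vecMulVec (N y) (Pi.single (Fin.last n) 1), by simp, ?_, ?_, ?_, ?_, ?_⟩
  · intro y
    have h1 : C11At (fun y => (y, N y)) y := (contDiffAt_id (n := 2)).c11At.prodMk (hNC y)
    refine ContDiffAt.comp_c11At (g := fun q : (Fin (n + 1) → ℝ) × (Fin (n + 1) → ℝ) =>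
      p + L q.1 + q.1 (Fin.last n) • q.2) (f := fun y => (y, N y)) ?_ h1
    fun_prop
  · intro y
    exact ⟨_, (unitNormal_spec (hpos y)).1, by simp [hLn, hp, hN, mul_comm]⟩
  · intro y hy
    have h1 : HasFDerivAt (fun y : Fin (n + 1) → ℝ => y (Fin.last n))
      (ContinuousLinearMap.proj (R := ℝ) (φ := fun _ : Fin (n + 1) => ℝ) (Fin.last n)) y :=
      (ContinuousLinearMap.proj (R := ℝ) (φ := fun _ : Fin (n + 1) => ℝ)
        (Fin.last n)).hasFDerivAt
    have h2 := (L.hasFDerivAt.const_add p).add (h1.smul (hNC y).eventually.self_of_nhds)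
    convert! h2 using 1
    ext v i
    simp [hy, hLa, vecMulVec_mulVec, mul_comm]
  · simpa [hN] using gram_eq_one (hgpos p hp.ge) hr hc hP
  · intro y hy j
    simpa [hy, hN] using gram_last (hpos y) hr hc j

/-- STATEMENT 17 (boundary normal coordinates), formulated in a local model: a
`C^{2,1}` manifold with boundary is locally the half space `ℍⁿ = {x | xₙ ≥ 0}`, and a
`C^{1,1}` metric is a map `g` into symmetric positive definite matrices whose entries
are `C¹` with Lipschitz derivative on `ℍⁿ`.  For every boundary point `p` there is a
`C^{1,1}` boundary chart `μ` around `p` (with `C^{1,1}` inverse `ν`, mapping boundary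
to boundary) such that `μ(p) = 0`, the pulled-back metric `G = (Dν)ᵀ (g∘ν) (Dν)`
satisfies `G(0) = δ` and `G_{jn}(q) = δ_{jn}` for every boundary point `q` of the
chart's image. -/
theorem stmt17 (n : ℕ)
    (g : (Fin (n + 1) → ℝ) → Matrix (Fin (n + 1)) (Fin (n + 1)) ℝ)
    (hgsymm : ∀ x : Fin (n + 1) → ℝ, 0 ≤ x (Fin.last n) → (g x).IsSymm)
    (hgpos : ∀ x : Fin (n + 1) → ℝ, 0 ≤ x (Fin.last n) → (g x).PosDef)
    (hgC1 : ∀ i j, ContDiffOn ℝ 1 (fun x => g x i j)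
      {x : Fin (n + 1) → ℝ | 0 ≤ x (Fin.last n)})
    (hgLip : ∃ K : NNReal, ∀ i j, LipschitzOnWith K
      (fun x => fderivWithin ℝ (fun y => g y i j)
        {x : Fin (n + 1) → ℝ | 0 ≤ x (Fin.last n)} x)
      {x : Fin (n + 1) → ℝ | 0 ≤ x (Fin.last n)})
    (p : Fin (n + 1) → ℝ) (hp : p (Fin.last n) = 0) :
    ∃ (U V : Set (Fin (n + 1) → ℝ)) (μ ν : (Fin (n + 1) → ℝ) → (Fin (n + 1) → ℝ)),
      IsOpen U ∧ p ∈ U ∧ IsOpen V ∧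
      μ p = 0 ∧
      μ '' (U ∩ {x | 0 ≤ x (Fin.last n)}) = V ∩ {x | 0 ≤ x (Fin.last n)} ∧
      (∀ x ∈ U ∩ {x | 0 ≤ x (Fin.last n)}, ν (μ x) = x) ∧
      (∀ y ∈ V ∩ {x | 0 ≤ x (Fin.last n)}, μ (ν y) = y) ∧
      (∀ x ∈ U ∩ {x | 0 ≤ x (Fin.last n)}, (x (Fin.last n) = 0 ↔ μ x (Fin.last n) = 0)) ∧
      ContDiffOn ℝ 1 μ (U ∩ {x | 0 ≤ x (Fin.last n)}) ∧
      ContDiffOn ℝ 1 ν (V ∩ {x | 0 ≤ x (Fin.last n)}) ∧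
      (∃ K : NNReal,
        LipschitzOnWith K (fderivWithin ℝ μ (U ∩ {x | 0 ≤ x (Fin.last n)}))
          (U ∩ {x | 0 ≤ x (Fin.last n)}) ∧
        LipschitzOnWith K (fderivWithin ℝ ν (V ∩ {x | 0 ≤ x (Fin.last n)}))
          (V ∩ {x | 0 ≤ x (Fin.last n)})) ∧
      pullbackMetric (n + 1) (V ∩ {x | 0 ≤ x (Fin.last n)}) ν g 0 = 1 ∧
      (∀ y ∈ V ∩ {x | 0 ≤ x (Fin.last n)}, y (Fin.last n) = 0 → ∀ j,
        pullbackMetric (n + 1) (V ∩ {x | 0 ≤ x (Fin.last n)}) ν g y j (Fin.last n) =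
          if j = Fin.last n then 1 else 0) := by
  obtain ⟨ν, J, hν0, hC, hsgn, hJ, hone, hlast⟩ :=
    exists_normalMap n g hgpos hgC1 hgLip p hp
  -- `(J 0)ᵀ * g p * J 0 = 1` exhibits an inverse of the Jacobian at `0`
  set D : (Fin (n + 1) → ℝ) ≃L[ℝ] (Fin (n + 1) → ℝ) :=
    (toLin'OfInv hone (mul_eq_one_comm.1 hone)).toContinuousLinearEquiv with hDdef
  have hD : HasFDerivAt ν (D : (Fin (n + 1) → ℝ) →L[ℝ] (Fin (n + 1) → ℝ)) 0 := by
    have : (D : (Fin (n + 1) → ℝ) →L[ℝ] (Fin (n + 1) → ℝ)) =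
        LinearMap.toContinuousLinearMap (toLin' (J 0)) := by
      ext v i
      rfl
    rw [this]
    exact hJ 0 rfl
  set φ := (hC 0).contDiffAt.toOpenPartialHomeomorph ν hD one_ne_zero with hφ
  have hφν : ∀ y, φ y = ν y := fun _ => rfl
  have h0 : (0 : Fin (n + 1) → ℝ) ∈ φ.source :=
    (hC 0).contDiffAt.mem_toOpenPartialHomeomorph_source hD one_ne_zero
  have hsymm : C11At φ.symm p := by
    have := C11At.symm φ h0 (hC 0) hD
    rwa [hφν, hν0] at this
  have hsp : φ.symm p = 0 := by rw [← hν0, ← hφν, φ.left_inv h0]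
  have hpt : p ∈ φ.target := by rw [← hν0, ← hφν]; exact φ.map_source h0
  obtain ⟨V₀, hV₀, h0V, hdV, K₁, hK₁⟩ := (hC 0).exists_open
  obtain ⟨U₀, hU₀, hpU, hdU, K₂, hK₂⟩ := hsymm.exists_open
  set H : Set (Fin (n + 1) → ℝ) := {x | 0 ≤ x (Fin.last n)} with hH
  set U := (φ.target ∩ φ.symm ⁻¹' V₀) ∩ U₀ with hU
  set V := φ.source ∩ φ ⁻¹' U with hV
  have hUo : IsOpen U := (φ.symm.isOpen_inter_preimage hV₀).inter hU₀
  have hVo : IsOpen V := φ.isOpen_inter_preimage hUo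
  have hVV₀ : V ⊆ V₀ := fun y hy => by
    have : φ.symm (φ y) ∈ V₀ := hy.2.1.2
    rwa [φ.left_inv hy.1] at this
  have hUV : ∀ x ∈ U, φ.symm x ∈ V := fun x hx =>
    ⟨φ.map_target hx.1.1, by rw [Set.mem_preimage, φ.right_inv hx.1.1]; exact hx⟩
  have hpUm : p ∈ U := ⟨⟨hpt, by rw [Set.mem_preimage, hsp]; exact h0V⟩, hpU⟩
  have h0Vm : (0 : Fin (n + 1) → ℝ) ∈ V := hsp ▸ hUV p hpUm
  -- the last coordinate of `ν y` is a positive multiple of that of `y`, so `ν` respects `H` and `∂H`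
  have hHν : ∀ y, ν y ∈ H ↔ y ∈ H := fun y => by
    obtain ⟨a, ha, h⟩ := hsgn y
    change 0 ≤ ν y (Fin.last n) ↔ 0 ≤ y (Fin.last n)
    rw [h, mul_nonneg_iff_of_pos_left ha]
  have hzν : ∀ y, ν y (Fin.last n) = 0 ↔ y (Fin.last n) = 0 := fun y => by
    obtain ⟨a, ha, h⟩ := hsgn y
    rw [h, mul_eq_zero, or_iff_right ha.ne']
  have hr : ∀ x ∈ U, ν (φ.symm x) = x := fun x hx => φ.right_inv hx.1.1
  have hl : ∀ y ∈ V, φ.symm (ν y) = y := fun y hy => φ.left_inv hy.1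
  have huV : UniqueDiffOn ℝ (V ∩ H) := by
    rw [Set.inter_comm]; exact (uniqueDiffOn_halfSpace n).inter hVo
  have huU : UniqueDiffOn ℝ (U ∩ H) := by
    rw [Set.inter_comm]; exact (uniqueDiffOn_halfSpace n).inter hUo
  obtain ⟨hc1, hl1⟩ := contDiffOn_lipschitz_within huV hV₀ hdV hK₁
    (Set.inter_subset_left.trans hVV₀)
  obtain ⟨hc2, hl2⟩ := contDiffOn_lipschitz_within huU hU₀ hdU hK₂
    (Set.inter_subset_left.trans fun x hx => hx.2)
  have hpb : ∀ y ∈ V ∩ H, y (Fin.last n) = 0 →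
      pullbackMetric (n + 1) (V ∩ H) ν g y = (J y)ᵀ * g (ν y) * J y := fun y hy hy0 => by
    have : jacobianWithin (n + 1) (V ∩ H) ν y = J y := by
      ext i j
      simp [jacobianWithin, (hJ y hy0).hasFDerivWithinAt.fderivWithin (huV y hy)]
    rw [pullbackMetric, this]
  refine ⟨U, V, φ.symm, ν, hUo, hpUm, hVo, hsp, ?_, fun x hx => hr x hx.1, fun y hy => hl y hy.1,
    fun x hx => ?_, hc2, hc1, ⟨max K₁ K₂, hl2.weaken (le_max_right _ _),
      hl1.weaken (le_max_left _ _)⟩, ?_, fun y hy hy0 j => ?_⟩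
  · ext y
    constructor
    · rintro ⟨x, hx, rfl⟩
      exact ⟨hUV x hx.1, (hHν _).1 (by rw [hr x hx.1]; exact hx.2)⟩
    · rintro ⟨hy, hyH⟩
      exact ⟨ν y, ⟨hy.2, (hHν y).2 hyH⟩, hl y hy⟩
  · rw [← hzν (φ.symm x), hr x hx.1]
  · rw [hpb 0 ⟨h0Vm, (le_rfl : (0 : ℝ) ≤ 0)⟩ rfl, hν0, hone]
  · rw [hpb y hy hy0, hlast y hy0]
end
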